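/- Let p, q be real numbers, let k be a positive integer with U_k(p,q) ≠ 0, let d ≥ 1, and let n ≥ d. Then Σ_{j=0}^{d} (4q^k)^(d−j) · (Σ_{i=0}^{j} (−1)^i · binom(j,i) · (j+1−i)^d) · ((V_k(p,q)² − 4q^k)/U_k(p,q))^j · s_{j+1}(n+j−d; p,q; k) = Σ_{j=1}^{d} ((−1)^(d−1) · (2q^k)^(d−j) / (j−1)!) · (Σ_{i=0}^{j−1} (−1)^i · binom(j−1,i) · (i+1)^(d−1)) · (Σ_{s=0}^{j} binom(j,s) · (−2q^k)^s · V_k(p,q)^(j−s) · (∏_{i=1}^{j} (n+j−d−s−i)) · U_{(n+j−d−s)·k}(p,q)), where the factors n+j−d−s−i in the product are taken as (possibly negative) integers. -/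

import Mathlib

/-- The generalized Fibonacci sequence: `U 0 = 0`, `U 1 = 1`,
`U (n+2) = p * U (n+1) - q * U n`. -/
def genU (p q : ℝ) : ℕ → ℝ
  | 0 => 0
  | 1 => 1
  | (n + 2) => p * genU p q (n + 1) - q * genU p q n

/-- The generalized Lucas sequence: `V 0 = 2`, `V 1 = p`,
`V (n+2) = p * V (n+1) - q * V n`. -/
def genV (p q : ℝ) : ℕ → ℝ
  | 0 => 2
  | 1 => p
  | (n + 2) => p * genV p q (n + 1) - q * genV p q n

/-- `s_d(n; p, q; k) = ∑_{j₁ + ⋯ + j_d = n} ∏_{i=1}^{d} U_{k jᵢ}(p, q)`,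
the sum being over `d`-tuples of nonnegative integers. -/
def sgen (p q : ℝ) (k d n : ℕ) : ℝ :=
  ∑ t ∈ Finset.Nat.antidiagonalTuple d n, ∏ i, genU p q (k * t i)

/-!
Let `W = ∑ f (r + 1) X ^ r` for a sequence with `f 0 = 0` and `f (m + 2) = a f (m + 1) - b f m`, so
that `W (1 - a X + b X ^ 2) = f 1`. Differentiating shows that the derivation
`T = (a - 2 b X) d/dX` satisfies the Riccati equation
`T W = 4 b W + ((a ^ 2 - 4 b) / f 1) W ^ 2`. Iterating it writes `T ^ d W` through the powers of
`W`, whose coefficients are convolutions of `f`, whereas expanding `T ^ d` as a differential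
operator writes it through the derivatives of `W`, whose coefficients are multiples of values of
`f`. Both expansions are governed by Stirling numbers of the second kind; these are the alternating
sums of the statement, being forward differences of `x ↦ x ^ d` at `1`. The theorem compares
coefficients of `X ^ (n - d)` in `X T ^ d W`, for `f m = U_{k m}`, `a = V_k` and `b = q ^ k`.
-/

open Finset PowerSeries
open scoped Nat

section Stirling

theorem neg_one_pow_sub {R : Type*} [Monoid R] [HasDistribNeg R] {m n : ℕ} (h : n ≤ m) :
    (-1 : R) ^ (m - n) = (-1) ^ m * (-1) ^ n := by
  rw [← pow_add]
  exact neg_one_pow_congr (by rw [Nat.even_sub h, Nat.even_add])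

theorem iterate_eq_sum_stirlingSecond_smul {R M : Type*} [CommSemiring R] [AddCommMonoid M]
    [Module R M] (T : M →ₗ[R] M) (x : R) (F : ℕ → M)
    (hF : ∀ j, T (F j) = ((j + 1) * x) • F j + F (j + 1)) (d : ℕ) :
    T^[d] (F 0) =
      ∑ j ∈ range (d + 1), (Nat.stirlingSecond (d + 1) (j + 1) * x ^ (d - j)) • F j := by
  induction d with
  | zero => simp [Nat.stirlingSecond_self]
  | succ d ih =>
    have apply_term (j : ℕ) (hj : j ∈ range (d + 1)) :
        T ((Nat.stirlingSecond (d + 1) (j + 1) * x ^ (d - j)) • F j) =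
          ((j + 1) * Nat.stirlingSecond (d + 1) (j + 1) * x ^ (d + 1 - j)) • F j +
            (Nat.stirlingSecond (d + 1) (j + 1) * x ^ (d + 1 - (j + 1))) • F (j + 1) := by
      rw [map_smul, hF, Nat.succ_sub (mem_range_succ_iff.mp hj), Nat.add_sub_add_right, pow_succ]
      module
    have recurrence (j : ℕ) :
        (Nat.stirlingSecond (d + 2) (j + 1) * x ^ (d + 1 - j)) • F j =
          ((j + 1) * Nat.stirlingSecond (d + 1) (j + 1) * x ^ (d + 1 - j)) • F j +
            (Nat.stirlingSecond (d + 1) j * x ^ (d + 1 - j)) • F j := by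
      rw [Nat.stirlingSecond_succ_succ (d + 1)]
      push_cast
      module
    rw [Function.iterate_succ_apply', ih, map_sum, sum_congr rfl apply_term, sum_add_distrib,
      sum_congr rfl fun j _ ↦ recurrence j, sum_add_distrib, sum_range_succ _ (d + 1),
      sum_range_succ' _ (d + 1)]
    simp [Nat.stirlingSecond_eq_zero_of_lt]

variable {R : Type*} [CommRing R]

theorem fwdDiff_iter_succ_mul_id (h : R) (f : R → R) (n : ℕ) (y : R) :
    (fwdDiff h)^[n + 1] (fun x ↦ f x * x) y =
      y * (fwdDiff h)^[n + 1] f y + (n + 1) * h * (fwdDiff h)^[n] f (y + h) := by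
  induction n generalizing y with
  | zero =>
    simp only [zero_add, Function.iterate_one, Function.iterate_zero, id_eq, fwdDiff, Nat.cast_zero]
    ring
  | succ n ih =>
    rw [Function.iterate_succ_apply', fwdDiff, ih, ih, Function.iterate_succ_apply' _ (n + 1) f,
      fwdDiff, Function.iterate_succ_apply' _ n f]
    simp only [fwdDiff]
    push_cast
    ring

theorem fwdDiff_iter_pow_one (d j : ℕ) :
    (fwdDiff 1)^[j] (fun x : R ↦ x ^ d) 1 = j ! * Nat.stirlingSecond (d + 1) (j + 1) := by
  induction d generalizing j with
  | zero =>
    rcases j with _ | j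
    · simp [Nat.stirlingSecond_self]
    · rw [fwdDiff_iter_pow_eq_zero_of_lt j.succ_pos]
      simp [Nat.stirlingSecond_eq_zero_of_lt]
  | succ d ih =>
    rcases j with _ | j
    · simp [Nat.stirlingSecond_one_right]
    · have shift : (fwdDiff 1)^[j] (fun x : R ↦ x ^ d) (1 + 1) =
          (fwdDiff 1)^[j + 1] (fun x : R ↦ x ^ d) 1 + (fwdDiff 1)^[j] (fun x : R ↦ x ^ d) 1 := by
        rw [Function.iterate_succ_apply', fwdDiff, sub_add_cancel]
      simp only [pow_succ _ d]
      rw [fwdDiff_iter_succ_mul_id, shift, ih, ih, Nat.stirlingSecond_succ_succ (d + 1),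
        Nat.factorial_succ]
      push_cast
      ring

theorem alternating_sum_choose_mul_add_one_sub_pow (d j : ℕ) :
    ∑ i ∈ range (j + 1), (-1 : R) ^ i * (j.choose i : R) * ((j : R) + 1 - i) ^ d =
      j ! * Nat.stirlingSecond (d + 1) (j + 1) := by
  rw [← fwdDiff_iter_pow_one, fwdDiff_iter_eq_sum_shift, ← sum_range_reflect]
  refine sum_congr rfl fun i hi ↦ ?_
  have hij : i ≤ j := mem_range_succ_iff.mp hi
  rw [add_tsub_cancel_right, Nat.choose_symm hij]
  push_cast [hij]
  simp

theorem alternating_sum_choose_mul_add_one_pow (d j : ℕ) :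
    ∑ i ∈ range (j + 1), (-1 : R) ^ i * (j.choose i : R) * ((i : R) + 1) ^ d =
      (-1) ^ j * (j ! * Nat.stirlingSecond (d + 1) (j + 1)) := by
  rw [← alternating_sum_choose_mul_add_one_sub_pow, ← sum_range_reflect, mul_sum]
  refine sum_congr rfl fun i hi ↦ ?_
  have hij : i ≤ j := mem_range_succ_iff.mp hi
  rw [add_tsub_cancel_right, Nat.choose_symm hij, neg_one_pow_sub hij, Nat.cast_sub hij]
  ring

end Stirling

section Derivation

variable {R A : Type*} [CommSemiring R] [CommSemiring A] [Algebra R A]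

theorem iterate_derivation_eq_sum_of_riccati (T : Derivation R A A) (x e : R) (w : A)
    (hw : T w = x • w + e • w ^ 2) (d : ℕ) :
    T^[d] w = ∑ j ∈ range (d + 1),
      (Nat.stirlingSecond (d + 1) (j + 1) * x ^ (d - j)) • (j ! * e ^ j) • w ^ (j + 1) := by
  have step (j : ℕ) : (T : A →ₗ[R] A) ((j ! * e ^ j : R) • w ^ (j + 1)) =
      ((j + 1) * x) • (j ! * e ^ j : R) • w ^ (j + 1) +
        ((j + 1)! * e ^ (j + 1) : R) • w ^ (j + 2) := by
    simp only [Derivation.coeFn_coe, map_smul, T.leibniz_pow, hw, add_tsub_cancel_right,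
      nsmul_eq_mul, smul_eq_mul, Nat.factorial_succ, Nat.cast_mul, Nat.cast_add, Nat.cast_one]
    simp only [Algebra.smul_def, map_mul, map_add, map_pow, map_natCast, map_one]
    ring
  simpa using iterate_eq_sum_stirlingSecond_smul (T : A →ₗ[R] A) x
    (fun j ↦ (j ! * e ^ j : R) • w ^ (j + 1)) step d

theorem iterate_smul_derivation_eq_sum (D : Derivation R A A) (L : A) (c : R)
    (hL : D L = algebraMap R A c) (w : A) (d : ℕ) :
    (L • D)^[d + 1] w = ∑ j ∈ range (d + 1),
      (Nat.stirlingSecond (d + 1) (j + 1) * c ^ (d - j)) • (L ^ (j + 1) * D^[j + 1] w) := by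
  have step (j : ℕ) : (L • D : A →ₗ[R] A) (L ^ (j + 1) * D^[j + 1] w) =
      ((j + 1) * c) • (L ^ (j + 1) * D^[j + 1] w) + L ^ (j + 2) * D^[j + 2] w := by
    rw [Function.iterate_succ_apply' _ (j + 1)]
    simp only [LinearMap.smul_apply, Derivation.coeFn_coe, D.leibniz, D.leibniz_pow, hL,
      add_tsub_cancel_right, nsmul_eq_mul, smul_eq_mul, Nat.cast_add, Nat.cast_one]
    simp only [Algebra.smul_def, map_mul, map_add, map_natCast, map_one]
    ring
  simpa using iterate_eq_sum_stirlingSecond_smul (L • D : A →ₗ[R] A) c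
    (fun j ↦ L ^ (j + 1) * D^[j + 1] w) step d

end Derivation

section GeneratingFunction

theorem sum_antidiagonalTuple_prod_eq_coeff_pow {R : Type*} [CommSemiring R] (f : ℕ → R)
    (d n : ℕ) :
    ∑ t ∈ Nat.antidiagonalTuple d n, ∏ i, f (t i) = coeff n (PowerSeries.mk f ^ d) := by
  have coeff_pow := coeff_prod (fun _ : Fin d ↦ PowerSeries.mk f) n univ
  simp only [prod_const, card_univ, Fintype.card_fin, coeff_mk] at coeff_pow
  rw [coeff_pow]
  refine sum_equiv Finsupp.equivFunOnFinite.symm (fun t ↦ ?_) fun t _ ↦ rfl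
  simp [Nat.mem_antidiagonalTuple]

/-- The generating function `∑ f (r + 1) X ^ r` of a sequence without its initial term. For
`f 0 = 0` and `f` satisfying a second-order linear recurrence it has a constant numerator. -/
def shiftedSeries {R : Type*} (f : ℕ → R) : R⟦X⟧ := PowerSeries.mk fun r ↦ f (r + 1)

theorem X_mul_shiftedSeries {R : Type*} [Semiring R] {f : ℕ → R} (hf : f 0 = 0) :
    X * shiftedSeries f = PowerSeries.mk f := by
  ext n
  cases n <;> simp [shiftedSeries, hf, coeff_succ_X_mul]

variable {R : Type*} [CommRing R]

theorem shiftedSeries_mul_eq_C {a b : R} {f : ℕ → R} (hf : f 0 = 0)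
    (hrec : ∀ m, f (m + 2) = a * f (m + 1) - b * f m) :
    shiftedSeries f * (1 - C a * X + C b * X ^ 2) = C (f 1) := by
  have expand : shiftedSeries f * (1 - C a * X + C b * X ^ 2) =
      shiftedSeries f - C a * (X * shiftedSeries f) + C b * (X * (X * shiftedSeries f)) := by ring
  rw [expand, X_mul_shiftedSeries hf]
  ext n
  rcases n with _ | _ | n <;> simp [shiftedSeries, hrec, hf, coeff_C, coeff_succ_X_mul]

/-- The derivation `(a - 2 b X) d/dX`, for which a constant divided by `P = 1 - a X + b X ^ 2`
satisfies a Riccati equation with constant coefficients; the factor is `-P'`. -/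
noncomputable def denomDerivation (a b : R) : Derivation R R⟦X⟧ R⟦X⟧ :=
  (C a - C (2 * b) * X) • d⁄dX R

theorem denomDerivation_apply_of_mul_eq_C {a b u e : R} {W : R⟦X⟧}
    (hW : W * (1 - C a * X + C b * X ^ 2) = C u) (he : u * e = a ^ 2 - 4 * b) :
    denomDerivation a b W = (4 * b) • W + e • W ^ 2 := by
  set P : R⟦X⟧ := 1 - C a * X + C b * X ^ 2 with hP
  set L : R⟦X⟧ := C a - C (2 * b) * X with hL
  have isUnit_P : IsUnit P := isUnit_iff_constantCoeff.mpr (by simp [hP])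
  have deriv_P : d⁄dX R P = -L := by
    simp only [hP, hL, map_add, map_sub, Derivation.leibniz, derivative_pow, derivative_one,
      derivative_C, derivative_X, map_mul, map_ofNat, smul_eq_mul]
    push_cast
    ring
  have sq_L : L ^ 2 = C (4 * b) * P + C u * C e := by
    rw [← map_mul, he]
    simp only [hP, hL, map_sub, map_mul, map_pow, map_ofNat]
    ring
  have deriv_W : P * d⁄dX R W = W * L := by
    have h := congrArg (d⁄dX R) hW
    simp only [Derivation.leibniz, deriv_P, derivative_C, smul_eq_mul] at h
    linear_combination h
  apply isUnit_P.mul_left_cancel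
  simp only [denomDerivation, Derivation.smul_apply, smul_eq_mul, smul_eq_C_mul, ← hL]
  linear_combination L * deriv_W + W * sq_L - W * C e * hW

theorem prod_Icc_add_sub_eq_ascFactorial (n j : ℕ) :
    ∏ i ∈ Icc 1 j, ((n : R) + j - i) = n.ascFactorial j := by
  rw [← Ico_add_one_right_eq_Icc, prod_Ico_eq_prod_range, Nat.ascFactorial_eq_prod_range,
    ← prod_range_reflect, Nat.cast_prod, add_tsub_cancel_right]
  refine prod_congr rfl fun i hi ↦ ?_
  obtain ⟨m, rfl⟩ := Nat.exists_eq_add_of_lt (mem_range.mp hi)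
  rw [show i + m + 1 - 1 - i = m by omega]
  push_cast
  ring

-- For `n ≤ s` the left side vanishes, and on the right either a factor of the product does, or the
-- truncated index `n + j - s` is `0`.
theorem coeff_X_pow_succ_mul_iterate_derivative {f : ℕ → R} (hf : f 0 = 0) {s j : ℕ} (hs : s ≤ j)
    (n : ℕ) :
    coeff n (X ^ (s + 1) * (d⁄dX R)^[j] (shiftedSeries f)) =
      (∏ i ∈ Icc 1 j, ((n : R) + j - s - i)) * f (n + j - s) := by
  rw [coeff_X_pow_mul']
  split_ifs with h
  · obtain ⟨m, rfl⟩ := Nat.exists_eq_add_of_le' h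
    rw [coeff_iterate_derivative, add_tsub_cancel_right, shiftedSeries, coeff_mk,
      ← prod_Icc_add_sub_eq_ascFactorial, show m + (s + 1) + j - s = m + j + 1 by omega]
    push_cast
    congr! 3
    ring
  · rcases Nat.eq_zero_or_pos (n + j - s) with index_zero | index_pos
    · rw [index_zero, hf, mul_zero]
    · rw [prod_eq_zero (mem_Icc.mpr ⟨index_pos, by omega⟩), zero_mul]
      rw [Nat.cast_sub (by omega)]
      push_cast
      ring

theorem coeff_X_mul_pow_mul_iterate_derivative {f : ℕ → R} (hf : f 0 = 0) (a b : R) (j n : ℕ) :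
    coeff n (X * ((C a - C (2 * b) * X) ^ j * (d⁄dX R)^[j] (shiftedSeries f))) =
      ∑ s ∈ range (j + 1), (j.choose s : R) * (-2 * b) ^ s * a ^ (j - s) *
        (∏ i ∈ Icc 1 j, ((n : R) + j - s - i)) * f (n + j - s) := by
  have binomial : (C a - C (2 * b) * X : R⟦X⟧) ^ j =
      ∑ s ∈ range (j + 1), C ((j.choose s : R) * (-2 * b) ^ s * a ^ (j - s)) * X ^ s := by
    have reorder : (C a - C (2 * b) * X : R⟦X⟧) = C (-2 * b) * X + C a := by
      rw [neg_mul, map_neg]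
      ring
    rw [reorder, add_pow]
    refine sum_congr rfl fun s _ ↦ ?_
    simp only [map_mul, map_pow, map_natCast]
    ring
  rw [binomial, sum_mul, mul_sum, map_sum]
  refine sum_congr rfl fun s hs ↦ ?_
  rw [mul_assoc (_ * _ * _),
    ← coeff_X_pow_succ_mul_iterate_derivative hf (mem_range_succ_iff.mp hs), ← coeff_C_mul,
    pow_succ]
  ring_nf

theorem sum_stirlingSecond_mul_sum_antidiagonalTuple {a b e : R} {f : ℕ → R} (hf : f 0 = 0)
    (hrec : ∀ m, f (m + 2) = a * f (m + 1) - b * f m) (he : f 1 * e = a ^ 2 - 4 * b) (d n : ℕ) :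
    ∑ j ∈ range (d + 2), (Nat.stirlingSecond (d + 2) (j + 1) * (4 * b) ^ (d + 1 - j)) *
        ((j ! * e ^ j) * ∑ t ∈ Nat.antidiagonalTuple (j + 1) (n + j), ∏ i, f (t i)) =
      ∑ j ∈ range (d + 1), (Nat.stirlingSecond (d + 1) (j + 1) * (-2 * b) ^ (d - j)) *
        ∑ s ∈ range (j + 2), ((j + 1).choose s : R) * (-2 * b) ^ s * a ^ (j + 1 - s) *
          (∏ i ∈ Icc 1 (j + 1), ((n : R) + (j + 1 : ℕ) - s - i)) * f (n + (j + 1) - s) := by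
  have riccati := denomDerivation_apply_of_mul_eq_C (shiftedSeries_mul_eq_C hf hrec) he
  have deriv_factor : d⁄dX R (C a - C (2 * b) * X) = algebraMap R R⟦X⟧ (-2 * b) := by
    simp [Derivation.leibniz]
  have expansions := congrArg (fun F ↦ coeff n (X * F))
    ((iterate_derivation_eq_sum_of_riccati _ _ _ _ riccati (d + 1)).symm.trans
      (iterate_smul_derivation_eq_sum _ _ _ deriv_factor (shiftedSeries f) d))
  have convolution (j : ℕ) : coeff n (X * shiftedSeries f ^ (j + 1)) =
      ∑ t ∈ Nat.antidiagonalTuple (j + 1) (n + j), ∏ i, f (t i) := by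
    rw [sum_antidiagonalTuple_prod_eq_coeff_pow, ← X_mul_shiftedSeries hf, mul_pow, pow_succ X,
      mul_assoc, coeff_X_pow_mul]
  simpa only [mul_sum, map_sum, mul_smul_comm, PowerSeries.coeff_smul, smul_eq_mul, convolution,
    coeff_X_mul_pow_mul_iterate_derivative hf] using expansions

end GeneratingFunction

theorem stmt_4_general {K : Type*} [Field K] [CharZero K] {a b : K} {f : ℕ → K} (hf : f 0 = 0)
    (hf' : f 1 ≠ 0) (hrec : ∀ m, f (m + 2) = a * f (m + 1) - b * f m) {d n : ℕ} (hd : 1 ≤ d)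
    (hn : d ≤ n) :
    ∑ j ∈ range (d + 1),
      (4 * b) ^ (d - j) *
        (∑ i ∈ range (j + 1), (-1 : K) ^ i * (j.choose i : K) * ((j : K) + 1 - i) ^ d) *
        ((a ^ 2 - 4 * b) / f 1) ^ j *
        ∑ t ∈ Nat.antidiagonalTuple (j + 1) (n + j - d), ∏ i, f (t i) =
    ∑ j ∈ Icc 1 d,
      ((-1 : K) ^ (d - 1) * (2 * b) ^ (d - j) / ((j - 1)! : K)) *
        (∑ i ∈ range j, (-1 : K) ^ i * ((j - 1).choose i : K) * ((i : K) + 1) ^ (d - 1)) *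
        ∑ s ∈ range (j + 1), (j.choose s : K) * (-2 * b) ^ s * a ^ (j - s) *
          (∏ i ∈ Icc 1 j, ((n : K) + j - d - s - i)) * f (n + j - d - s) := by
  obtain ⟨N, rfl⟩ := Nat.exists_eq_add_of_le' hn
  obtain ⟨d, rfl⟩ := Nat.exists_eq_add_of_le' hd
  have index (j : ℕ) : N + (d + 1) + j - (d + 1) = N + j := by omega
  have index_cast (j : ℕ) : ((N + (d + 1) : ℕ) : K) + j - (d + 1 : ℕ) = N + j := by
    push_cast
    ring
  simp only [index, index_cast]
  rw [← Ico_add_one_right_eq_Icc, sum_Ico_eq_sum_range, add_tsub_cancel_right]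
  simp only [add_comm 1, add_tsub_cancel_right, Nat.add_sub_add_right,
    alternating_sum_choose_mul_add_one_sub_pow, alternating_sum_choose_mul_add_one_pow]
  convert sum_stirlingSecond_mul_sum_antidiagonalTuple hf hrec (mul_div_cancel₀ _ hf') d N
    using 2 with j _ j hj
  · ring
  · have factorial_ne_zero : (j ! : K) ≠ 0 := mod_cast j.factorial_ne_zero
    rw [neg_mul, neg_pow (2 * b) (d - j), neg_one_pow_sub (mem_range_succ_iff.mp hj)]
    field_simp

theorem genV_mul_genU (p q : ℝ) (k m : ℕ) :
    genV p q k * genU p q (m + k) = genU p q (m + 2 * k) + q ^ k * genU p q m := by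
  induction k using Nat.twoStepInduction generalizing m with
  | zero => simp [genV, two_mul]
  | one => simp [genV, genU]
  | more k ih₀ ih₁ =>
    have h₀ := ih₀ (m + 2)
    have h₁ := ih₁ (m + 1)
    have hU : genU p q (m + 2 * k + 4) =
        p * genU p q (m + 2 * k + 3) - q * genU p q (m + 2 * k + 2) := rfl
    have hm : genU p q (m + 2) = p * genU p q (m + 1) - q * genU p q m := rfl
    rw [genV]
    ring_nf at h₀ h₁ hU hm ⊢
    linear_combination p * h₁ - q * h₀ - hU - q ^ (k + 1) * hm

theorem genU_mul_add_two (p q : ℝ) (k m : ℕ) :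
    genU p q (k * (m + 2)) = genV p q k * genU p q (k * (m + 1)) - q ^ k * genU p q (k * m) := by
  rw [mul_add_one k m, genV_mul_genU, add_sub_cancel_right, mul_add, mul_comm k 2]

/-- The main recurrence relating `s_{j+1}` for `0 ≤ j ≤ d`. -/
theorem stmt_4 (p q : ℝ) (k : ℕ) (hk : 1 ≤ k) (hU : genU p q k ≠ 0)
    (d : ℕ) (hd : 1 ≤ d) (n : ℕ) (hn : d ≤ n) :
    ∑ j ∈ Finset.range (d + 1),
      (4 * q ^ k) ^ (d - j) *
        (∑ i ∈ Finset.range (j + 1),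
          (-1 : ℝ) ^ i * (Nat.choose j i : ℝ) * ((j : ℝ) + 1 - (i : ℝ)) ^ d) *
        (((genV p q k) ^ 2 - 4 * q ^ k) / genU p q k) ^ j *
        sgen p q k (j + 1) (n + j - d) =
    ∑ j ∈ Finset.Icc 1 d,
      ((-1 : ℝ) ^ (d - 1) * (2 * q ^ k) ^ (d - j) / (Nat.factorial (j - 1) : ℝ)) *
        (∑ i ∈ Finset.range j,
          (-1 : ℝ) ^ i * (Nat.choose (j - 1) i : ℝ) * ((i : ℝ) + 1) ^ (d - 1)) *
        (∑ s ∈ Finset.range (j + 1),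
          (Nat.choose j s : ℝ) * (-2 * q ^ k) ^ s * (genV p q k) ^ (j - s) *
            (∏ i ∈ Finset.Icc 1 j,
              ((n : ℝ) + (j : ℝ) - (d : ℝ) - (s : ℝ) - (i : ℝ))) *
            genU p q ((n + j - d - s) * k)) := by
  simpa [sgen, mul_comm k] using
    stmt_4_general (f := fun m ↦ genU p q (k * m)) rfl (by simpa) (genU_mul_add_two p q k) hd hn
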